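/- arXiv:1503.02862 — 2 statements merged into one kernel-verified Lean document; each statement's English description precedes it below -/
import Mathlib

section
/- Under the stated hypotheses on φ, the identity ∫₀^∞ s^{a+2}·φ'(s)² ds = ((3+a)/(3−a))·∫₀^∞ s^{a+2}·φ(s)² ds holds. -/
open MeasureTheory Real in
lemma aux_int (g : ℝ → ℝ) (hg : ContinuousOn g (Set.Ioi 0)) (K L δ b : ℝ) (hδ : 0 < δ) (hb : 0 < b)
    (h0 : ∀ s ∈ Set.Ioc (0:ℝ) 1, |g s| ≤ K)
    (h1 : ∀ s : ℝ, 1 ≤ s → |g s| ≤ L * (s ^ b * Real.exp (-δ * s))) :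
    IntegrableOn g (Set.Ioi 0) := by
  rw [← Set.Ioc_union_Ioi_eq_Ioi (zero_le_one' ℝ)]
  refine IntegrableOn.union ?_ ?_
  · refine Integrable.mono' (g := fun _ => K) (integrableOn_const (by simp))
      ((hg.mono (fun x hx => hx.1)).aestronglyMeasurable measurableSet_Ioc) ?_
    exact (ae_restrict_mem measurableSet_Ioc).mono h0
  · have h2 : IntegrableOn (fun s : ℝ => L * (s ^ b * Real.exp (-δ * s))) (Set.Ioi 1) := by
      have := integrableOn_rpow_mul_exp_neg_mul_rpow (s := b) (p := 1) (b := δ) (by linarith) one_pos hδ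
      simp only [Real.rpow_one] at this
      exact (this.mono_set (Set.Ioi_subset_Ioi zero_le_one)).const_mul L
    refine Integrable.mono' h2
      ((hg.mono (Set.Ioi_subset_Ioi zero_le_one)).aestronglyMeasurable measurableSet_Ioi) ?_
    exact (ae_restrict_mem measurableSet_Ioi).mono (fun s hs => h1 s (le_of_lt hs))

open MeasureTheory Real in
theorem stmt_2 (γ a : ℝ) (hγ : γ ∈ Set.Ioo (0:ℝ) 1) (ha : a = 1 - 2*γ)
    (φ : ℝ → ℝ) (hφ : ContDiffOn ℝ 2 φ (Set.Ioi 0))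
    (hode : ∀ s : ℝ, 0 < s → deriv (deriv φ) s + (a / s) * deriv φ s - φ s = 0)
    (hbdd : ∃ C : ℝ, ∀ s ∈ Set.Ioc (0:ℝ) 1, |φ s| ≤ C)
    (hbdd' : ∃ C : ℝ, ∀ s ∈ Set.Ioc (0:ℝ) 1, |s ^ a * deriv φ s| ≤ C)
    (hdecay : ∃ C δ : ℝ, 0 < C ∧ 0 < δ ∧
      ∀ s : ℝ, 1 ≤ s → |φ s| + |deriv φ s| ≤ C * Real.exp (-δ * s)) :
    ∫ s in Set.Ioi (0:ℝ), s ^ (a+2) * (deriv φ s)^2 =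
      ((3+a)/(3-a)) * ∫ s in Set.Ioi (0:ℝ), s ^ (a+2) * (φ s)^2 := by
  obtain ⟨C0, h0⟩ := hbdd
  obtain ⟨C1, h1⟩ := hbdd'
  obtain ⟨C, δ, hC, hδ, hd⟩ := hdecay
  have ha1 : a < 1 := by linarith [hγ.1]
  have ha2 : -1 < a := by linarith [hγ.2]
  have hD1 : ContDiffOn ℝ 1 (deriv φ) (Set.Ioi 0) :=
    hφ.deriv_of_isOpen isOpen_Ioi (by norm_num)
  have hφd : ∀ s : ℝ, 0 < s → HasDerivAt φ (deriv φ s) s := fun s hs =>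
    ((hφ.differentiableOn (by norm_num)).differentiableAt (Ioi_mem_nhds hs)).hasDerivAt
  have hpd : ∀ s : ℝ, 0 < s → HasDerivAt (deriv φ) (φ s - a / s * deriv φ s) s := fun s hs => by
    have := ((hD1.differentiableOn (by norm_num)).differentiableAt (Ioi_mem_nhds hs)).hasDerivAt
    rwa [show deriv (deriv φ) s = φ s - a / s * deriv φ s by linarith [hode s hs]] at this
  have hrc : ∀ b : ℝ, ContinuousOn (fun s : ℝ => s ^ b) (Set.Ioi 0) := fun b s hs =>
    (Real.continuousAt_rpow_const s b (Or.inl (ne_of_gt hs))).continuousWithinAt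
  -- pointwise bounds
  have hb0 : ∀ b : ℝ, ∀ s ∈ Set.Ioc (0:ℝ) 1, s ^ b * (φ s)^2 ≤ C0^2 * s ^ b := by
    intro b s hs
    have := Real.rpow_nonneg hs.1.le b
    have h := sq_le_sq' (abs_le.1 (h0 s hs)).1 (abs_le.1 (h0 s hs)).2
    nlinarith
  have hb1 : ∀ b : ℝ, ∀ s ∈ Set.Ioc (0:ℝ) 1, s ^ b * (deriv φ s)^2 ≤ C1^2 * s ^ (b - 2*a) := by
    intro b s hs
    have := Real.rpow_nonneg hs.1.le (b - 2*a)
    have h := sq_le_sq' (abs_le.1 (h1 s hs)).1 (abs_le.1 (h1 s hs)).2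
    have e : s ^ b = s ^ (b - 2*a) * (s^a * s^a) := by
      rw [← Real.rpow_add hs.1, ← Real.rpow_add hs.1]; congr 1; ring
    rw [e]
    nlinarith
  have hdd : ∀ s : ℝ, 1 ≤ s → (φ s)^2 ≤ C^2 * Real.exp (-(2*δ) * s) ∧
      (deriv φ s)^2 ≤ C^2 * Real.exp (-(2*δ) * s) := by
    intro s hs
    have e : C^2 * Real.exp (-(2*δ) * s) = (C * Real.exp (-δ * s))^2 := by
      rw [mul_pow, ← Real.exp_nat_mul]; congr 2; push_cast; ring
    rw [e]
    have h := hd s hs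
    constructor
    · exact sq_le_sq.2 ((by linarith [abs_nonneg (deriv φ s)] : |φ s| ≤ _).trans (le_abs_self _))
    · exact sq_le_sq.2 ((by linarith [abs_nonneg (φ s)] : |deriv φ s| ≤ _).trans (le_abs_self _))
  have hI0 : IntegrableOn (fun s : ℝ => s ^ (a+2) * (φ s)^2) (Set.Ioi 0) := by
    refine aux_int _ ((hrc _).mul (hφ.continuousOn.pow 2)) (C0^2) (C^2) (2*δ) (a+2) (by linarith)
      (by linarith) ?_ ?_
    · intro s hs
      rw [abs_of_nonneg (mul_nonneg (Real.rpow_nonneg hs.1.le _) (sq_nonneg _))]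
      refine (hb0 _ s hs).trans ?_
      exact mul_le_of_le_one_right (sq_nonneg _) (Real.rpow_le_one hs.1.le hs.2 (by linarith))
    · intro s hs
      have hn := Real.rpow_nonneg (zero_le_one.trans hs) (a+2)
      rw [abs_of_nonneg (mul_nonneg hn (sq_nonneg _))]
      have := mul_le_mul_of_nonneg_left (hdd s hs).1 hn
      linarith
  have hI1 : IntegrableOn (fun s : ℝ => s ^ (a+2) * (deriv φ s)^2) (Set.Ioi 0) := by
    refine aux_int _ ((hrc _).mul (hD1.continuousOn.pow 2)) (C1^2) (C^2) (2*δ) (a+2) (by linarith)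
      (by linarith) ?_ ?_
    · intro s hs
      rw [abs_of_nonneg (mul_nonneg (Real.rpow_nonneg hs.1.le _) (sq_nonneg _))]
      refine (hb1 _ s hs).trans ?_
      exact mul_le_of_le_one_right (sq_nonneg _) (Real.rpow_le_one hs.1.le hs.2 (by linarith))
    · intro s hs
      have hn := Real.rpow_nonneg (zero_le_one.trans hs) (a+2)
      rw [abs_of_nonneg (mul_nonneg hn (sq_nonneg _))]
      have := mul_le_mul_of_nonneg_left (hdd s hs).2 hn
      linarith
  have hFd : ∀ s ∈ Set.Ioi (0:ℝ), HasDerivAt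
      (fun s : ℝ => s ^ (a+3) * (deriv φ s)^2 - s ^ (a+3) * (φ s)^2)
      ((3-a) * (s ^ (a+2) * (deriv φ s)^2) - (3+a) * (s ^ (a+2) * (φ s)^2)) s := by
    intro s hs
    have hs' : (0:ℝ) < s := hs
    have hr := Real.hasDerivAt_rpow_const (x := s) (p := a+3) (Or.inl hs'.ne')
    have := (hr.mul ((hpd s hs').pow 2)).sub (hr.mul ((hφd s hs').pow 2))
    refine this.congr_deriv ?_
    have e1 : s ^ (a+3) = s ^ (a+2) * s := by
      rw [← Real.rpow_add_one hs'.ne']; congr 1; ring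
    have e2 : a + 3 - 1 = a + 2 := by ring
    rw [e2]
    simp only [Pi.pow_apply]
    rw [e1]
    field_simp
    ring
  have hlim0 : ContinuousWithinAt
      (fun s : ℝ => s ^ (a+3) * (deriv φ s)^2 - s ^ (a+3) * (φ s)^2) (Set.Ici 0) 0 := by
    rw [← continuousWithinAt_Ioi_iff_Ici]
    unfold ContinuousWithinAt
    beta_reduce
    rw [Real.zero_rpow (by linarith), zero_mul, zero_mul, sub_zero]
    have key : ∀ (K b : ℝ), 0 < b → Filter.Tendsto (fun s : ℝ => K * s ^ b)
        (nhdsWithin 0 (Set.Ioi 0)) (nhds 0) := by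
      intro K b hb
      have := ((Real.continuousAt_rpow_const 0 b (Or.inr hb.le)).tendsto.const_mul K)
      rw [Real.zero_rpow hb.ne', mul_zero] at this
      exact this.mono_left nhdsWithin_le_nhds
    have hmem : Set.Ioc (0:ℝ) 1 ∈ nhdsWithin (0:ℝ) (Set.Ioi 0) := Ioc_mem_nhdsGT one_pos
    have t1 : Filter.Tendsto (fun s : ℝ => s ^ (a+3) * (deriv φ s)^2)
        (nhdsWithin 0 (Set.Ioi 0)) (nhds 0) := by
      refine squeeze_zero' ?_ ?_ (key (C1^2) (a+3-2*a) (by linarith))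
      · filter_upwards [hmem] with s hs
        exact mul_nonneg (Real.rpow_nonneg hs.1.le _) (sq_nonneg _)
      · filter_upwards [hmem] with s hs using hb1 _ s hs
    have t0 : Filter.Tendsto (fun s : ℝ => s ^ (a+3) * (φ s)^2)
        (nhdsWithin 0 (Set.Ioi 0)) (nhds 0) := by
      refine squeeze_zero' ?_ ?_ (key (C0^2) (a+3) (by linarith))
      · filter_upwards [hmem] with s hs
        exact mul_nonneg (Real.rpow_nonneg hs.1.le _) (sq_nonneg _)
      · filter_upwards [hmem] with s hs using hb0 _ s hs
    simpa using t1.sub t0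
  have hliminf : Filter.Tendsto
      (fun s : ℝ => s ^ (a+3) * (deriv φ s)^2 - s ^ (a+3) * (φ s)^2) Filter.atTop (nhds 0) := by
    have key := (tendsto_rpow_mul_exp_neg_mul_atTop_nhds_zero (a+3) (2*δ) (by linarith)).const_mul (C^2)
    rw [mul_zero] at key
    have hmem := Filter.eventually_ge_atTop (1:ℝ)
    have t : ∀ f : ℝ → ℝ, (∀ s : ℝ, 1 ≤ s → (f s)^2 ≤ C^2 * Real.exp (-(2*δ) * s)) →
        Filter.Tendsto (fun s : ℝ => s ^ (a+3) * (f s)^2) Filter.atTop (nhds 0) := by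
      intro f hf
      refine squeeze_zero' ?_ ?_ key
      · filter_upwards [hmem] with s hs
        exact mul_nonneg (Real.rpow_nonneg (zero_le_one.trans hs) _) (sq_nonneg _)
      · filter_upwards [hmem] with s hs
        have := mul_le_mul_of_nonneg_left (hf s hs) (Real.rpow_nonneg (zero_le_one.trans hs) (a+3))
        linarith
    simpa using (t _ (fun s hs => (hdd s hs).2)).sub (t _ (fun s hs => (hdd s hs).1))
  have main := integral_Ioi_of_hasDerivAt_of_tendsto hlim0 hFd
    ((hI1.const_mul (3-a)).sub (hI0.const_mul (3+a))) hliminf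
  rw [integral_sub (hI1.const_mul (3-a)) (hI0.const_mul (3+a)), integral_const_mul,
    integral_const_mul, Real.zero_rpow (by linarith)] at main
  have h3 : 3 - a ≠ 0 := by linarith
  rw [div_mul_eq_mul_div, eq_div_iff h3]
  linarith
end

section
/- Under the stated hypotheses on φ, if additionally n is an integer with n > 4 + 2γ, then ∫₀^∞ s^{n−4+a}·φ(s)² ds = ((n−4)(n−5+a)(n−3−a)/(4(n−3)))·∫₀^∞ s^{n−6+a}·φ(s)² ds. -/
open MeasureTheory Real Filter Topology in
lemma aux_zero (u : ℝ → ℝ) (C q : ℝ) (hq : 0 < q) (hu : ∀ s ∈ Set.Ioc (0:ℝ) 1, |u s| ≤ C) :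
    Tendsto (fun s : ℝ => s ^ q * u s) (𝓝[>] 0) (𝓝 0) := by
  have h1 : Tendsto (fun s : ℝ => s ^ q * C) (𝓝[>] 0) (𝓝 0) := by
    have : ContinuousAt (fun s : ℝ => s ^ q * C) 0 :=
      (Real.continuousAt_rpow_const _ _ (Or.inr hq.le)).mul continuousAt_const
    have h2 := this.tendsto
    simp only [Real.zero_rpow hq.ne', zero_mul] at h2
    exact h2.mono_left nhdsWithin_le_nhds
  refine squeeze_zero_norm' ?_ h1
  filter_upwards [Ioc_mem_nhdsGT (zero_lt_one' ℝ)] with s hs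
  rw [norm_mul, Real.norm_eq_abs, Real.norm_eq_abs, abs_of_nonneg (Real.rpow_nonneg hs.1.le q)]
  exact mul_le_mul_of_nonneg_left (hu s hs) (Real.rpow_nonneg hs.1.le q)

open MeasureTheory Real Filter Topology in
lemma aux_top (u : ℝ → ℝ) (C q b : ℝ) (hb : 0 < b)
    (hu : ∀ s : ℝ, 1 ≤ s → |u s| ≤ C * Real.exp (-b * s)) :
    Tendsto (fun s : ℝ => s ^ q * u s) atTop (𝓝 0) := by
  have h1 := (tendsto_rpow_mul_exp_neg_mul_atTop_nhds_zero q b hb).const_mul C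
  rw [mul_zero] at h1
  refine squeeze_zero_norm' ?_ h1
  filter_upwards [eventually_ge_atTop (1:ℝ)] with s hs
  have h0 : 0 ≤ s ^ q := Real.rpow_nonneg (by linarith) q
  rw [norm_mul, Real.norm_eq_abs, Real.norm_eq_abs, abs_of_nonneg h0]
  calc _ ≤ s ^ q * (C * Real.exp (-b * s)) := mul_le_mul_of_nonneg_left (hu s hs) h0
    _ = _ := by ring

open MeasureTheory Real Filter Topology in
lemma aux_int_s5 (u : ℝ → ℝ) (C D q b : ℝ) (hb : 0 < b) (hq : -1 < q)
    (hc : ContinuousOn u (Set.Ioi 0))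
    (hu0 : ∀ s ∈ Set.Ioc (0:ℝ) 1, |u s| ≤ D)
    (hu : ∀ s : ℝ, 1 ≤ s → |u s| ≤ C * Real.exp (-b * s)) :
    IntegrableOn (fun s : ℝ => s ^ q * u s) (Set.Ioi 0) := by
  have hD : 0 ≤ D := (abs_nonneg _).trans (hu0 1 (by simp))
  have h1 := (integrableOn_rpow_mul_exp_neg_mul_rpow (p := 1) hq zero_lt_one hb).const_mul
    (max C (D * Real.exp b))
  refine Integrable.mono' h1 ?_ ?_
  · refine ContinuousOn.aestronglyMeasurable ?_ measurableSet_Ioi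
    refine ContinuousOn.mul ?_ hc
    intro s hs
    exact (Real.continuousAt_rpow_const _ _ (Or.inl (ne_of_gt hs))).continuousWithinAt
  · refine (ae_restrict_iff' measurableSet_Ioi).2 (ae_of_all _ fun s hs => ?_)
    have hs : 0 < s := hs
    have h0 : 0 ≤ s ^ q := Real.rpow_nonneg hs.le q
    rw [norm_mul, Real.norm_eq_abs, Real.norm_eq_abs, abs_of_nonneg h0, Real.rpow_one]
    have key : |u s| ≤ max C (D * Real.exp b) * Real.exp (-b * s) := by
      rcases le_total s 1 with h | h
      · calc |u s| ≤ D := hu0 s ⟨hs, h⟩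
          _ ≤ D * (Real.exp (b + -b * s)) :=
            le_mul_of_one_le_right hD (Real.one_le_exp (by nlinarith))
          _ = D * Real.exp b * Real.exp (-b * s) := by rw [Real.exp_add]; ring
          _ ≤ _ := mul_le_mul_of_nonneg_right (le_max_right _ _) (Real.exp_pos _).le
      · exact (hu s h).trans
          (mul_le_mul_of_nonneg_right (le_max_left _ _) (Real.exp_pos _).le)
    calc _ ≤ s ^ q * (max C (D * Real.exp b) * Real.exp (-b * s)) :=
          mul_le_mul_of_nonneg_left key h0
      _ = _ := by ring

open MeasureTheory Real in
theorem stmt_5 (γ a : ℝ) (hγ : γ ∈ Set.Ioo (0:ℝ) 1) (ha : a = 1 - 2*γ)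
    (φ : ℝ → ℝ) (hφ : ContDiffOn ℝ 2 φ (Set.Ioi 0))
    (hode : ∀ s : ℝ, 0 < s → deriv (deriv φ) s + (a / s) * deriv φ s - φ s = 0)
    (hbdd : ∃ C : ℝ, ∀ s ∈ Set.Ioc (0:ℝ) 1, |φ s| ≤ C)
    (hbdd' : ∃ C : ℝ, ∀ s ∈ Set.Ioc (0:ℝ) 1, |s ^ a * deriv φ s| ≤ C)
    (hdecay : ∃ C δ : ℝ, 0 < C ∧ 0 < δ ∧
      ∀ s : ℝ, 1 ≤ s → |φ s| + |deriv φ s| ≤ C * Real.exp (-δ * s))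
    (n : ℤ) (hn : 4 + 2*γ < (n:ℝ)) :
    ∫ s in Set.Ioi (0:ℝ), s ^ ((n:ℝ)-4+a) * (φ s)^2 =
      (((n:ℝ)-4)*((n:ℝ)-5+a)*((n:ℝ)-3-a)/(4*((n:ℝ)-3))) *
        ∫ s in Set.Ioi (0:ℝ), s ^ ((n:ℝ)-6+a) * (φ s)^2 := by
  obtain ⟨C0, h0⟩ := hbdd
  obtain ⟨C1, h1⟩ := hbdd'
  obtain ⟨C, δ, hC, hδ, hd⟩ := hdecay
  obtain ⟨hγ0, hγ1⟩ := hγ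
  generalize (n:ℝ) = N at *
  have hd1 : ∀ s : ℝ, 0 < s → HasDerivAt φ (deriv φ s) s := fun s hs =>
    ((hφ.differentiableOn (by norm_num)).differentiableAt (Ioi_mem_nhds hs)).hasDerivAt
  have hdd : ContDiffOn ℝ 1 (deriv φ) (Set.Ioi 0) :=
    hφ.deriv_of_isOpen isOpen_Ioi (by norm_num)
  have hd2 : ∀ s : ℝ, 0 < s → HasDerivAt (deriv φ) (φ s - a / s * deriv φ s) s := fun s hs => by
    have := ((hdd.differentiableOn (by norm_num)).differentiableAt (Ioi_mem_nhds hs)).hasDerivAt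
    refine this.congr_deriv ?_
    linarith [hode s hs]
  set ψ := deriv φ with hψ
  -- bounds for products
  have hA : ∀ s : ℝ, 1 ≤ s → ∀ x y : ℝ, |x| ≤ C * Real.exp (-δ * s) →
      |y| ≤ C * Real.exp (-δ * s) → |x * y| ≤ C ^ 2 * Real.exp (-(2 * δ) * s) := by
    intro s hs x y hx hy
    rw [abs_mul]
    calc _ ≤ (C * Real.exp (-δ * s)) * (C * Real.exp (-δ * s)) :=
          mul_le_mul hx hy (abs_nonneg _) (by positivity)
      _ = C ^ 2 * (Real.exp (-δ * s + -δ * s)) := by rw [Real.exp_add]; ring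
      _ = _ := by ring_nf
  have hφd : ∀ s : ℝ, 1 ≤ s → |φ s| ≤ C * Real.exp (-δ * s) := fun s hs =>
    (le_add_of_nonneg_right (abs_nonneg _)).trans (hd s hs)
  have hψd : ∀ s : ℝ, 1 ≤ s → |ψ s| ≤ C * Real.exp (-δ * s) := fun s hs =>
    (le_add_of_nonneg_left (abs_nonneg _)).trans (hd s hs)
  have hδ2 : 0 < 2 * δ := by linarith
  have e1 : ∀ s : ℝ, 1 ≤ s → |(φ s)^2| ≤ C ^ 2 * Real.exp (-(2 * δ) * s) := fun s hs => by
    rw [pow_two (φ s)]; exact hA s hs _ _ (hφd s hs) (hφd s hs)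
  have e2 : ∀ s : ℝ, 1 ≤ s → |(ψ s)^2| ≤ C ^ 2 * Real.exp (-(2 * δ) * s) := fun s hs => by
    rw [pow_two (ψ s)]; exact hA s hs _ _ (hψd s hs) (hψd s hs)
  have e3 : ∀ s : ℝ, 1 ≤ s → |φ s * ψ s| ≤ C ^ 2 * Real.exp (-(2 * δ) * s) := fun s hs =>
    hA s hs _ _ (hφd s hs) (hψd s hs)
  have z1 : ∀ s ∈ Set.Ioc (0:ℝ) 1, |(φ s)^2| ≤ C0 ^ 2 := fun s hs => by
    rw [abs_pow]; exact pow_le_pow_left₀ (abs_nonneg _) (h0 s hs) 2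
  have z2 : ∀ s ∈ Set.Ioc (0:ℝ) 1, |(s ^ a * ψ s)^2| ≤ C1 ^ 2 := fun s hs => by
    rw [abs_pow]; exact pow_le_pow_left₀ (abs_nonneg _) (h1 s hs) 2
  have z3 : ∀ s ∈ Set.Ioc (0:ℝ) 1, |φ s * (s ^ a * ψ s)| ≤ C0 * C1 := fun s hs => by
    rw [abs_mul]
    exact mul_le_mul (h0 s hs) (h1 s hs) (abs_nonneg _) ((abs_nonneg _).trans (h0 s hs))
  have hcφ : ContinuousOn (fun s => (φ s)^2) (Set.Ioi 0) := hφ.continuousOn.pow 2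
  have i1 := aux_int_s5 (fun s => (φ s)^2) (C^2) (C0^2) (N-4+a) (2*δ) hδ2 (by linarith) hcφ z1 e1
  have i2 := aux_int_s5 (fun s => (φ s)^2) (C^2) (C0^2) (N-6+a) (2*δ) hδ2 (by linarith) hcφ z1 e1
  let F : ℝ → ℝ := fun s => s ^ (N-3+a) * (φ s)^2 - s ^ (N-3+a) * (ψ s)^2
    + (N-3-a) * (s ^ (N-4+a) * (φ s * ψ s)) - (N-3-a)*(N-4)/2 * (s ^ (N-5+a) * (φ s)^2)
  have hF0 : F 0 = 0 := by
    simp only [F]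
    rw [Real.zero_rpow (by linarith), Real.zero_rpow (by linarith), Real.zero_rpow (by linarith)]
    ring
  have hFz : Filter.Tendsto F (nhdsWithin 0 (Set.Ioi 0)) (nhds 0) := by
    have t1 := aux_zero (fun s => (φ s)^2) _ (N-3+a) (by linarith) z1
    have t2 := aux_zero (fun s => (s ^ a * ψ s)^2) _ (N-3-a) (by linarith) z2
    have t3 := aux_zero (fun s => φ s * (s ^ a * ψ s)) _ (N-4) (by linarith) z3
    have t4 := aux_zero (fun s => (φ s)^2) _ (N-5+a) (by linarith) z1
    have t := ((t1.sub t2).add (t3.const_mul (N-3-a))).sub (t4.const_mul ((N-3-a)*(N-4)/2))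
    simp only [mul_zero, sub_zero, add_zero] at t
    refine t.congr' ?_
    filter_upwards [self_mem_nhdsWithin] with s hs
    have hs : 0 < s := hs
    simp only [F]
    have r1 : s ^ (N-3+a) = s ^ (N-3-a) * (s ^ a * s ^ a) := by
      rw [← Real.rpow_add hs, ← Real.rpow_add hs]; ring_nf
    have r2 : s ^ (N-4+a) = s ^ (N-4) * s ^ a := by
      rw [← Real.rpow_add hs]
    rw [r1, r2]; ring
  have hFt : Filter.Tendsto F Filter.atTop (nhds 0) := by
    have t1 := aux_top (fun s => (φ s)^2) _ (N-3+a) _ hδ2 e1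
    have t2 := aux_top (fun s => (ψ s)^2) _ (N-3+a) _ hδ2 e2
    have t3 := aux_top (fun s => φ s * ψ s) _ (N-4+a) _ hδ2 e3
    have t4 := aux_top (fun s => (φ s)^2) _ (N-5+a) _ hδ2 e1
    have t := ((t1.sub t2).add (t3.const_mul (N-3-a))).sub (t4.const_mul ((N-3-a)*(N-4)/2))
    simp only [mul_zero, sub_zero, add_zero] at t
    exact t
  have hFc : ContinuousWithinAt F (Set.Ici 0) 0 := by
    rw [← continuousWithinAt_Ioi_iff_Ici, ContinuousWithinAt, hF0]
    exact hFz
  have hFd : ∀ s ∈ Set.Ioi (0:ℝ), HasDerivAt F (2*(N-3) * (s ^ (N-4+a) * (φ s)^2)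
      - (N-4)*(N-5+a)*(N-3-a)/2 * (s ^ (N-6+a) * (φ s)^2)) s := by
    intro s hs
    have hs : 0 < s := hs
    have hr : ∀ q : ℝ, HasDerivAt (fun s : ℝ => s ^ q) (q * s ^ (q-1)) s := fun q =>
      Real.hasDerivAt_rpow_const (Or.inl hs.ne')
    have p1 := (hr (N-3+a)).mul ((hd1 s hs).pow 2)
    have p2 := (hr (N-3+a)).mul ((hd2 s hs).pow 2)
    have p3 := ((hr (N-4+a)).mul ((hd1 s hs).mul (hd2 s hs))).const_mul (N-3-a)
    have p4 := ((hr (N-5+a)).mul ((hd1 s hs).pow 2)).const_mul ((N-3-a)*(N-4)/2)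
    have p := ((p1.sub p2).add p3).sub p4
    refine HasDerivAt.congr_deriv (f := F) p ?_
    have r : ∀ q : ℝ, s ^ (q + 1) = s ^ q * s := fun q => by
      rw [Real.rpow_add hs, Real.rpow_one]
    have q5 : s ^ (N-5+a) = s ^ (N-6+a) * s := by rw [← r]; ring_nf
    have q4 : s ^ (N-4+a) = s ^ (N-6+a) * s * s := by rw [← q5, ← r]; ring_nf
    have q3 : s ^ (N-3+a) = s ^ (N-6+a) * s * s * s := by rw [← q4, ← r]; ring_nf
    rw [show N-3+a-1 = N-4+a by ring, show N-4+a-1 = N-5+a by ring,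
      show N-5+a-1 = N-6+a by ring, q3, q4, q5]
    simp only [Pi.pow_apply, Pi.mul_apply]
    field_simp
    push_cast
    ring
  have hI := integral_Ioi_of_hasDerivAt_of_tendsto hFc hFd
    ((i1.const_mul _).sub (i2.const_mul _)) hFt
  rw [integral_sub (i1.const_mul _) (i2.const_mul _), integral_const_mul, integral_const_mul,
    hF0] at hI
  have hN : N - 3 ≠ 0 := by linarith
  field_simp
  linarith
end
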